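/- Let {H_iα_i}_{i=1}^{s} be a coset partition of F_n (n ≥ 1) with indices 1 < d_1 ≤ … ≤ d_s, and let h_i be the period of the transition matrix A_i of H_i. Then for every 1 ≤ i ≤ s there exists j ≠ i such that h_i divides h_j (in particular, either h_i = h_j or h_i properly divides h_j). -/

import Mathlib

/-!
Let `ℓ : F_n → ℤ` be the homomorphism sending every generator to `1`. For a subgroup `H` of finite
index and period `h` one has `ℓ(H) ⊆ hℤ`: modulo the normal core of `H`, an inverse generator is a
positive power of that generator, so that every element of `H` may be replaced by a positive word
in `H` without changing `ℓ` modulo `h` (`lengthChar_eq_one_of_mem`). Positive words of length `m`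
in `H` are counted by `(A ^ m)(H, H)`, where `A` is the transition matrix (`schreierMatrix_pow_pos_iff`).

Given `i` with `h_i > 1`, let `ζ` be a primitive `h_i`-th root of unity and `χ = ζ ^ ℓ`, a
nontrivial character of `F_n` that is trivial on `H_i`. All the cosets `H_j α_j` descend to a finite
quotient of `F_n` through which `χ` factors. There the sum of `χ` over the whole group is `0`, and
its sum over `H_j α_j` is `0` unless `χ` is trivial on `H_j`, while the sum over `H_i α_i` is not
`0`. Hence `χ` is trivial on `H_j` for some `j ≠ i` (`exists_ne_le_ker`), and then every positive
word in `H_j` has length divisible by `h_i`, that is, `h_i ∣ h_j`. If `h_i = 1`, it suffices that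
there is a `j ≠ i`, which holds because `H_i α_i` is not the whole group.
-/


attribute [local instance] Classical.propDecidable

noncomputable section

/-- The set of right cosets `Hg` of a subgroup `H` of `G`. -/
abbrev RightCosets {G : Type*} [Group G] (H : Subgroup G) : Type _ :=
  Quotient (QuotientGroup.rightRel H)

/-- The right coset `Hg`, as an element of the right coset space. -/
def rcoset {G : Type*} [Group G] (H : Subgroup G) (g : G) : RightCosets H :=
  Quotient.mk'' g

/-- Right multiplication by `a` descends to the right coset space. -/
def cosetMul {G : Type*} [Group G] (H : Subgroup G) (a : G) :
    RightCosets H → RightCosets H :=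
  Quotient.map' (· * a) (fun x y hxy => by
    rw [QuotientGroup.rightRel_apply] at hxy ⊢
    simpa [mul_inv_rev, mul_assoc] using hxy)

noncomputable instance rightCosetsFintype {G : Type*} [Group G] (H : Subgroup G)
    [H.FiniteIndex] : Fintype (RightCosets H) :=
  have : Finite (G ⧸ H) := H.finite_quotient_of_finiteIndex
  have : Finite (RightCosets H) :=
    Finite.of_equiv _ (QuotientGroup.quotientRightRelEquivQuotientLeftRel H).symm
  Fintype.ofFinite _

/-- The transition matrix of the Schreier graph of a subgroup `H` of the free group `F_n`:
rows and columns are indexed by the right cosets of `H`, and the `(x, y)` entry is the number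
of generators `a_i` with `x · a_i = y`. -/
def schreierMatrix {n : ℕ} (H : Subgroup (FreeGroup (Fin n))) :
    Matrix (RightCosets H) (RightCosets H) ℕ :=
  Matrix.of fun x y => Nat.card {i : Fin n // cosetMul H (FreeGroup.of i) x = y}

/-- The gcd of a set of natural numbers: the natural generator of the ideal of `ℤ`
generated by the set. -/
def setGcd (S : Set ℕ) : ℕ :=
  (Submodule.IsPrincipal.generator (Ideal.span ((fun m : ℕ => (m : ℤ)) '' S))).natAbs

/-- The period of the transition matrix of the Schreier graph of `H`: the gcd of all `m ≥ 1`
such that the `(H, H)` entry of `A ^ m` is positive. -/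
def schreierPeriod {n : ℕ} (H : Subgroup (FreeGroup (Fin n))) [H.FiniteIndex] : ℕ :=
  setGcd {m : ℕ | 1 ≤ m ∧ 0 < (schreierMatrix H ^ m) (rcoset H 1) (rcoset H 1)}

/-- The right coset `Hg`, as a subset of `G`. -/
def rightCosetSet {G : Type*} [Group G] (H : Subgroup G) (g : G) : Set G :=
  {x : G | x * g⁻¹ ∈ H}

/-- `{H_i α_i}` is a coset partition: the right cosets `H_i α_i` are pairwise disjoint and
their union is the whole group. -/
def IsCosetPartition {G : Type*} [Group G] {ι : Type*}
    (H : ι → Subgroup G) (α : ι → G) : Prop :=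
  (∀ x : G, ∃ i, x ∈ rightCosetSet (H i) (α i)) ∧
    Pairwise fun i j => Disjoint (rightCosetSet (H i) (α i)) (rightCosetSet (H j) (α j))

/-- The element of the free group associated to a positive word `w` of length `k`. -/
def wordProd {n k : ℕ} (w : Fin k → Fin n) : FreeGroup (Fin n) :=
  (List.ofFn fun j => FreeGroup.of (w j)).prod

/-- The number of positive words of length `k` whose associated element lies in `Hα`. -/
def cosetCount {n : ℕ} (H : Subgroup (FreeGroup (Fin n))) (α : FreeGroup (Fin n))
    (k : ℕ) : ℕ :=
  Nat.card {w : Fin k → Fin n // wordProd w ∈ rightCosetSet H α}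

/-- The generating function of the coset `Hα`. -/
def genFun {n : ℕ} (H : Subgroup (FreeGroup (Fin n))) (α : FreeGroup (Fin n)) (z : ℂ) : ℂ :=
  ∑' k : ℕ, (cosetCount H α k : ℂ) * z ^ k

end

noncomputable section

/-- The transition matrix, regarded as a complex matrix. -/
def schreierMatrixC {n : ℕ} (H : Subgroup (FreeGroup (Fin n))) :
    Matrix (RightCosets H) (RightCosets H) ℂ :=
  (schreierMatrix H).map (Nat.cast : ℕ → ℂ)

/-- The polynomial `q(z) = det (I - z A) ∈ ℂ[z]`, for `A` the transition matrix of `H`. -/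
def detPoly {n : ℕ} (H : Subgroup (FreeGroup (Fin n))) [H.FiniteIndex] : Polynomial ℂ :=
  Matrix.det
    ((1 : Matrix (RightCosets H) (RightCosets H) (Polynomial ℂ)) -
      (Polynomial.X : Polynomial ℂ) • (schreierMatrix H).map (fun m : ℕ => (Polynomial.C (m : ℂ))))

/-- The power series `f_{xy}(z) = ∑_k (A^k)(x,y) z^k`. -/
def pathSeries {n : ℕ} (H : Subgroup (FreeGroup (Fin n))) [H.FiniteIndex]
    (x y : RightCosets H) (z : ℂ) : ℂ :=
  ∑' k : ℕ, (((schreierMatrix H ^ k) x y : ℕ) : ℂ) * z ^ k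

/-- The residue class `dℤ + r`, as a subset of `ℤ`. -/
def residueClass (d : ℕ) (r : ℤ) : Set ℤ :=
  {x : ℤ | (d : ℤ) ∣ x - r}

end

/-! ### Characters and coset partitions -/

/-- For a finite group, the sum of a character over a right coset of a subgroup on which it is
not trivial vanishes. -/
lemma sum_coset_eq_zero {Q : Type*} [Group Q] [Fintype Q] (χ : Q →* ℂˣ) (H : Subgroup Q) (a : Q)
    (hH : ¬ H ≤ χ.ker) :
    ∑ q : Q, (if q * a⁻¹ ∈ H then (χ q : ℂ) else 0) = 0 := by
  obtain ⟨h, hh, hne⟩ := SetLike.not_le_iff_exists.1 hH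
  have hne' : (χ h : ℂ) ≠ 1 := fun e => hne (MonoidHom.mem_ker.2 (Units.ext e))
  -- Left translation by `h` preserves the coset and multiplies the sum by `χ h`.
  have key : ∑ q : Q, (if q * a⁻¹ ∈ H then (χ q : ℂ) else 0)
      = (χ h : ℂ) * ∑ q : Q, (if q * a⁻¹ ∈ H then (χ q : ℂ) else 0) := by
    rw [Finset.mul_sum, ← Equiv.sum_comp (Equiv.mulLeft h)]
    refine Finset.sum_congr rfl fun q _ => ?_
    have : (h * q * a⁻¹ ∈ H) ↔ (q * a⁻¹ ∈ H) := by
      rw [mul_assoc]; exact H.mul_mem_cancel_left hh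
    simp [this]
  have h0 : (1 - (χ h : ℂ)) * ∑ q : Q, (if q * a⁻¹ ∈ H then (χ q : ℂ) else 0) = 0 := by
    linear_combination key
  exact (mul_eq_zero.1 h0).resolve_left (sub_ne_zero.2 (Ne.symm hne'))

lemma exists_ne_le_ker_of_finite {Q : Type*} [Group Q] [Fintype Q] {s : ℕ}
    (H : Fin s → Subgroup Q) (α : Fin s → Q) (hpart : IsCosetPartition H α)
    (χ : Q →* ℂˣ) (hχ : χ ≠ 1) (i : Fin s) (hi : H i ≤ χ.ker) :
    ∃ j, j ≠ i ∧ H j ≤ χ.ker := by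
  by_contra! hcon
  have htot : ∑ q : Q, (χ q : ℂ) = 0 := by
    have := sum_coset_eq_zero χ ⊤ 1 (fun h => hχ (by
      ext q; simpa using congrArg Units.val (MonoidHom.mem_ker.1 (h (Subgroup.mem_top q)))))
    simpa using this
  have hsplit : ∀ q : Q, (χ q : ℂ) = ∑ j, (if q * (α j)⁻¹ ∈ H j then (χ q : ℂ) else 0) := by
    intro q
    obtain ⟨j, hj⟩ := hpart.1 q
    rw [Finset.sum_eq_single j]
    · exact (if_pos hj).symm
    · intro k _ hk
      exact if_neg fun hk' => Set.disjoint_left.1 (hpart.2 hk) hk' hj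
    · simp
  have hsum : ∑ q : Q, (if q * (α i)⁻¹ ∈ H i then (χ q : ℂ) else 0) = 0 := by
    rw [Finset.sum_congr rfl fun q _ => hsplit q, Finset.sum_comm] at htot
    refine Eq.trans (Eq.symm ?_) htot
    exact Finset.sum_eq_single i (fun j _ hj => sum_coset_eq_zero χ (H j) (α j) (hcon j hj))
      (fun h => absurd (Finset.mem_univ i) h)
  -- On the coset of index `i` the character takes the constant value `χ (α i)`.
  have hconst : ∀ q : Q, (if q * (α i)⁻¹ ∈ H i then (χ q : ℂ) else 0)
      = (if q * (α i)⁻¹ ∈ H i then 1 else 0) * (χ (α i) : ℂ) := by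
    intro q
    split_ifs with h
    · have := MonoidHom.mem_ker.1 (hi h)
      rw [map_mul, map_inv, mul_inv_eq_one] at this
      rw [this, one_mul]
    · simp
  rw [Finset.sum_congr rfl fun q _ => hconst q, ← Finset.sum_mul] at hsum
  have h1 := (mul_eq_zero.1 hsum).resolve_right (Units.ne_zero _)
  rw [Finset.sum_boole, Nat.cast_eq_zero, Finset.card_eq_zero] at h1
  have : α i ∈ (∅ : Finset Q) := h1 ▸ by simp [one_mem]
  simp at this

/-- In a coset partition by subgroups of finite index, a nontrivial character that is trivial on
one of the subgroups is trivial on another one. -/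
lemma exists_ne_le_ker {G : Type*} [Group G] {s : ℕ}
    (H : Fin s → Subgroup G) (α : Fin s → G) [∀ i, (H i).FiniteIndex]
    (hpart : IsCosetPartition H α)
    (χ : G →* ℂˣ) (hχ : χ ≠ 1) (i : Fin s) (hi : H i ≤ χ.ker) :
    ∃ j, j ≠ i ∧ H j ≤ χ.ker := by
  let K : Subgroup G := ⨅ j, (H j).normalCore
  have hK : ∀ j, K ≤ H j := fun j => (iInf_le _ j).trans (H j).normalCore_le
  have : K.Normal := Subgroup.normal_iInf_normal fun j => inferInstance
  have : K.FiniteIndex := Subgroup.finiteIndex_iInf fun j => inferInstance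
  have : Fintype (G ⧸ K) := Fintype.ofFinite _
  have hmem : ∀ j g, (QuotientGroup.mk' K g ∈ (H j).map (QuotientGroup.mk' K)) ↔ g ∈ H j := by
    intro j g
    rw [← Subgroup.mem_comap, Subgroup.comap_map_eq_self]
    simpa using hK j
  have hmem' : ∀ j g, QuotientGroup.mk' K g ∈ rightCosetSet ((H j).map (QuotientGroup.mk' K))
      (QuotientGroup.mk' K (α j)) ↔ g ∈ rightCosetSet (H j) (α j) := by
    intro j g
    change QuotientGroup.mk' K g * (QuotientGroup.mk' K (α j))⁻¹ ∈
      (H j).map (QuotientGroup.mk' K) ↔ g * (α j)⁻¹ ∈ H j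
    rw [← map_inv, ← map_mul, hmem]
  have hsurj := QuotientGroup.mk'_surjective K
  let ψ : G ⧸ K →* ℂˣ := QuotientGroup.lift K χ fun x hx => hi (hK i hx)
  have hψ : ∀ g, ψ (QuotientGroup.mk' K g) = χ g := fun g => rfl
  obtain ⟨j, hj, hle⟩ := exists_ne_le_ker_of_finite
    (fun j => (H j).map (QuotientGroup.mk' K)) (fun j => QuotientGroup.mk' K (α j))
    ⟨fun q => by
      obtain ⟨g, rfl⟩ := hsurj q
      obtain ⟨j, hj⟩ := hpart.1 g
      exact ⟨j, (hmem' j g).2 hj⟩,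
    fun j k hjk => Set.disjoint_left.2 fun q => by
      obtain ⟨g, rfl⟩ := hsurj q
      intro h1 h2
      exact Set.disjoint_left.1 (hpart.2 hjk) ((hmem' j g).1 h1) ((hmem' k g).1 h2)⟩
    ψ (fun h => hχ (MonoidHom.ext fun g => by rw [← hψ, h]; rfl)) i
    (by
      rintro _ ⟨g, hg, rfl⟩
      exact hi hg)
  exact ⟨j, hj, fun g hg => hle ((hmem j g).2 hg)⟩

/-! ### The period in terms of positive words -/

lemma dvd_setGcd {S : Set ℕ} {h : ℕ} (hS : ∀ m ∈ S, h ∣ m) : h ∣ setGcd S := by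
  have hle : Ideal.span ((fun m : ℕ => (m : ℤ)) '' S) ≤ Ideal.span {(h : ℤ)} := by
    rw [Ideal.span_le]
    rintro _ ⟨m, hm, rfl⟩
    exact Ideal.mem_span_singleton.2 (Int.natCast_dvd_natCast.2 (hS m hm))
  exact Int.natCast_dvd.1 (Ideal.mem_span_singleton.1
    (hle (Submodule.IsPrincipal.generator_mem _)))

lemma setGcd_dvd {S : Set ℕ} {m : ℕ} (hm : m ∈ S) : setGcd S ∣ m := by
  have : (m : ℤ) ∈ Ideal.span ((fun m : ℕ => (m : ℤ)) '' S) := Ideal.subset_span ⟨m, hm, rfl⟩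
  have h := (Submodule.IsPrincipal.mem_iff_generator_dvd _).1 this
  exact Int.natCast_dvd_natCast.1 (Int.natAbs_dvd.2 h)

/-- The element of the free group represented by a positive word, given as a list of indices
of generators. -/
def posWord {n : ℕ} (l : List (Fin n)) : FreeGroup (Fin n) :=
  (l.map FreeGroup.of).prod

lemma schreierMatrix_pow_pos_iff {n : ℕ} (H : Subgroup (FreeGroup (Fin n))) [H.FiniteIndex] (m : ℕ)
    (g : FreeGroup (Fin n)) (y : RightCosets H) :
    0 < (schreierMatrix H ^ m) (rcoset H g) y ↔
      ∃ l : List (Fin n), l.length = m ∧ rcoset H (g * posWord l) = y := by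
  induction m generalizing g with
  | zero =>
    rw [pow_zero, Matrix.one_apply]
    constructor
    · intro h
      refine ⟨[], rfl, ?_⟩
      by_contra hne
      rw [if_neg (by simpa [posWord] using hne)] at h
      exact lt_irrefl _ h
    · rintro ⟨l, hl, h⟩
      rw [List.length_eq_zero_iff] at hl
      subst hl
      rw [if_pos (by simpa [posWord] using h)]
      exact one_pos
  | succ m ih =>
    rw [pow_succ', Matrix.mul_apply, Finset.sum_pos_iff]
    constructor
    · rintro ⟨z, -, hz⟩
      have h1 := Nat.pos_of_mul_pos_right hz
      have h2 := Nat.pos_of_mul_pos_left hz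
      obtain ⟨⟨a, ha⟩⟩ := (Nat.card_pos_iff.1 h1).1
      obtain rfl : rcoset H (g * FreeGroup.of a) = z := ha
      obtain ⟨l, hl, h⟩ := (ih _).1 h2
      exact ⟨a :: l, by simp [hl], by simpa [posWord, mul_assoc] using h⟩
    · rintro ⟨l, hl, h⟩
      obtain ⟨a, l, rfl⟩ := List.exists_cons_of_length_eq_add_one hl
      refine ⟨rcoset H (g * FreeGroup.of a), Finset.mem_univ _, Nat.mul_pos ?_ ?_⟩
      · exact Nat.card_pos_iff.2 ⟨⟨⟨a, rfl⟩⟩, inferInstance⟩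
      · exact (ih _).2 ⟨l, by simpa using hl, by simpa [posWord, mul_assoc] using h⟩

lemma rcoset_eq_one_iff {G : Type*} [Group G] (H : Subgroup G) (g : G) :
    rcoset H g = rcoset H 1 ↔ g ∈ H := by
  unfold rcoset
  rw [Quotient.eq'', QuotientGroup.rightRel_apply]
  simp

lemma period_dvd_length {n : ℕ} (H : Subgroup (FreeGroup (Fin n))) [H.FiniteIndex]
    (l : List (Fin n)) (hl : posWord l ∈ H) : schreierPeriod H ∣ l.length := by
  rcases Nat.eq_zero_or_pos l.length with h0 | h0
  · simp [h0]
  · refine setGcd_dvd ⟨h0, (schreierMatrix_pow_pos_iff H _ _ _).2 ⟨l, rfl, ?_⟩⟩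
    rwa [rcoset_eq_one_iff, one_mul]

lemma dvd_period {n : ℕ} (H : Subgroup (FreeGroup (Fin n))) [H.FiniteIndex] (h : ℕ)
    (hd : ∀ l : List (Fin n), posWord l ∈ H → h ∣ l.length) : h ∣ schreierPeriod H := by
  refine dvd_setGcd ?_
  rintro m ⟨-, hm⟩
  obtain ⟨l, rfl, hl⟩ := (schreierMatrix_pow_pos_iff H _ _ _).1 hm
  rw [rcoset_eq_one_iff, one_mul] at hl
  exact hd l hl

lemma posWord_replicate {n : ℕ} (a : Fin n) (k : ℕ) :
    posWord (List.replicate k a) = FreeGroup.of a ^ k := by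
  simp [posWord]

lemma period_ne_zero {n : ℕ} (hn : 1 ≤ n) (H : Subgroup (FreeGroup (Fin n))) [H.FiniteIndex] :
    schreierPeriod H ≠ 0 := by
  have h := period_dvd_length H (List.replicate H.normalCore.index ⟨0, hn⟩)
    (by rw [posWord_replicate]; exact H.normalCore_le (Subgroup.pow_index_mem _ _))
  intro h0
  rw [h0, zero_dvd_iff, List.length_replicate] at h
  exact Subgroup.FiniteIndex.index_ne_zero h

/-! ### Characters of the length homomorphism -/

/-- The character of `F_n` sending every generator to `ζ`. -/
def lengthChar {n : ℕ} (ζ : ℂˣ) : FreeGroup (Fin n) →* ℂˣ :=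
  FreeGroup.lift fun _ => ζ

lemma lengthChar_posWord {n : ℕ} (ζ : ℂˣ) (l : List (Fin n)) :
    lengthChar ζ (posWord l) = ζ ^ l.length := by
  induction l with
  | nil => simp [posWord]
  | cons a l ih =>
    have : posWord (a :: l) = FreeGroup.of a * posWord l := by simp [posWord]
    rw [this, map_mul, ih, List.length_cons, pow_succ']
    simp [lengthChar]

/-- Every element agrees, modulo the normal core of `H`, with a positive word on which the
character takes the same value. -/
lemma exists_posWord {n : ℕ} (H : Subgroup (FreeGroup (Fin n))) [H.FiniteIndex] (ζ : ℂˣ)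
    (hζ : ζ ^ schreierPeriod H = 1) (g : FreeGroup (Fin n)) :
    ∃ l : List (Fin n), (posWord l : FreeGroup (Fin n) ⧸ H.normalCore) = g ∧
      lengthChar ζ (posWord l) = lengthChar ζ g := by
  induction g using FreeGroup.induction_on with
  | C1 => exact ⟨[], rfl, rfl⟩
  | of a => exact ⟨[a], by simp [posWord], by simp [posWord]⟩
  | inv_of a _ =>
    -- With `N` the index of the core, `a ^ N` lies in `H`, so `a ^ (N - 1)` replaces `a⁻¹`.
    obtain ⟨k, hk⟩ := Nat.exists_eq_succ_of_ne_zero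
      (Subgroup.FiniteIndex.index_ne_zero (H := H.normalCore))
    have hmem : FreeGroup.of a ^ (k + 1) ∈ H.normalCore := by
      have := Subgroup.pow_index_mem H.normalCore (FreeGroup.of a)
      rwa [hk] at this
    have hdvd := period_dvd_length H (List.replicate (k + 1) a)
      (by rw [posWord_replicate]; exact H.normalCore_le hmem)
    rw [List.length_replicate] at hdvd
    obtain ⟨c, hc⟩ := hdvd
    refine ⟨List.replicate k a, ?_, ?_⟩
    · rw [posWord_replicate, QuotientGroup.eq, ← mul_inv_rev, ← pow_succ']
      exact inv_mem hmem
    · rw [lengthChar_posWord, List.length_replicate, map_inv, eq_inv_iff_mul_eq_one]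
      have : lengthChar ζ (FreeGroup.of a) = ζ := by simp [lengthChar]
      rw [this, ← pow_succ, hc, pow_mul, hζ, one_pow]
  | mul x y hx hy =>
    obtain ⟨l, h1, h2⟩ := hx
    obtain ⟨l', h1', h2'⟩ := hy
    have hm : posWord (l ++ l') = posWord l * posWord l' := by simp [posWord]
    refine ⟨l ++ l', ?_, ?_⟩
    · rw [hm, QuotientGroup.mk_mul, QuotientGroup.mk_mul, h1, h1']
    · rw [hm, map_mul, map_mul, h2, h2']

lemma lengthChar_eq_one_of_mem {n : ℕ} (H : Subgroup (FreeGroup (Fin n))) [H.FiniteIndex]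
    (ζ : ℂˣ) (hζ : ζ ^ schreierPeriod H = 1) (g : FreeGroup (Fin n)) (hg : g ∈ H) :
    lengthChar ζ g = 1 := by
  obtain ⟨l, h1, h2⟩ := exists_posWord H ζ hζ g
  have hl : posWord l ∈ H := by
    have h := H.normalCore_le (QuotientGroup.eq.1 h1)
    exact inv_mem_iff.1 ((H.mul_mem_cancel_right hg).1 h)
  obtain ⟨c, hc⟩ := period_dvd_length H l hl
  rw [← h2, lengthChar_posWord, hc, pow_mul, hζ, one_pow]

/-- **Theorem.** If `{H_i α_i}` is a coset partition of `F_n` with indices `1 < d_1 ≤ … ≤ d_s`,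
then every period `h_i` divides some other period `h_j`, `j ≠ i` (so either `h_i = h_j` or
`h_i` properly divides `h_j`). -/
theorem period_divides_another (n s : ℕ) (hn : 1 ≤ n)
    (H : Fin s → Subgroup (FreeGroup (Fin n))) (α : Fin s → FreeGroup (Fin n))
    [inst : ∀ i, (H i).FiniteIndex]
    (d : Fin s → ℕ) (hindex : ∀ i, (H i).index = d i)
    (hd1 : ∀ i, 1 < d i) (hmono : Monotone d)
    (hpart : IsCosetPartition H α) :
    ∀ i, ∃ j, j ≠ i ∧ schreierPeriod (H i) ∣ schreierPeriod (H j) := by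
  intro i
  by_cases h1 : schreierPeriod (H i) = 1
  · have hne : H i ≠ ⊤ := fun h => by
      have := hd1 i
      rw [← hindex i, h, Subgroup.index_top] at this
      exact lt_irrefl _ this
    obtain ⟨g, -, hg⟩ := SetLike.exists_of_lt (lt_top_iff_ne_top.2 hne)
    obtain ⟨j, hj⟩ := hpart.1 (g * α i)
    refine ⟨j, ?_, h1 ▸ one_dvd _⟩
    rintro rfl
    exact hg (by simpa [rightCosetSet] using hj)
  · have h0 := period_ne_zero hn (H i)
    have hprim := (Complex.isPrimitiveRoot_exp _ h0)
    obtain ⟨ζ, hζ⟩ := hprim.isUnit h0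
    rw [← hζ, IsPrimitiveRoot.coe_units_iff] at hprim
    have hχ : lengthChar (n := n) ζ ≠ 1 := fun h => by
      have := DFunLike.congr_fun h (FreeGroup.of ⟨0, hn⟩)
      rw [MonoidHom.one_apply] at this
      simp only [lengthChar, FreeGroup.lift_apply_of] at this
      exact h1 (Nat.dvd_one.1 (hprim.dvd_of_pow_eq_one 1 (by rw [this, one_pow])))
    obtain ⟨j, hj, hle⟩ := exists_ne_le_ker H α hpart (lengthChar ζ) hχ i
      fun g hg => lengthChar_eq_one_of_mem (H i) ζ hprim.pow_eq_one g hg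
    refine ⟨j, hj, dvd_period (H j) _ fun l hl => hprim.dvd_of_pow_eq_one _ ?_⟩
    rw [← lengthChar_posWord]
    exact hle hl
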